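/- Let R be a commutative ring with nilradical √R and let f(z) = Σ a_n z^n ∈ R((z)) with a_0 a unit and a_n ∈ √R for all n < 0. Then f is invertible in R((z)), and the leading coefficient (the coefficient of z^0) of f^{-1} is a unit modulo nilpotents. -/

import Mathlib

/-!
Write `f = N + P`, where `N` collects the terms with negative exponent. There are only finitely
many of them, so `N` is a finite sum of nilpotent monomials and hence nilpotent, while `P` has a
unit as its leading coefficient and hence is a unit; thus `f` is a unit. Modulo the nilradical `f`
becomes a series starting at `z⁰` with a unit coefficient, and therefore so does its inverse.
-/

section LeadingTerm

variable {Γ R : Type*} [LinearOrder Γ]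

theorem hahnSeries_order_eq_of_coeff_ne_zero [Zero Γ] [Zero R] {x : HahnSeries Γ R} {a : Γ}
    (ha : x.coeff a ≠ 0) (hlt : ∀ b < a, x.coeff b = 0) : x.order = a := by
  have hx : x ≠ 0 := HahnSeries.ne_zero_of_coeff_ne_zero ha
  refine (HahnSeries.order_le_of_coeff_ne_zero ha).antisymm (le_of_not_gt fun h ↦ ?_)
  exact HahnSeries.coeff_order_eq_zero.not.mpr hx (hlt _ h)

variable [AddCommMonoid Γ] [IsOrderedCancelAddMonoid Γ]

theorem hahnSeries_isUnit_of_isUnit_coeff_zero [CommRing R] {x : HahnSeries Γ R}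
    (h0 : IsUnit (x.coeff 0)) (hneg : ∀ a < 0, x.coeff a = 0) : IsUnit x := by
  nontriviality R
  have hx : x.order = 0 := hahnSeries_order_eq_of_coeff_ne_zero h0.ne_zero hneg
  apply HahnSeries.isUnit_of_isUnit_leadingCoeff_AddUnitOrder
  · rwa [HahnSeries.leadingCoeff_eq, hx]
  · rw [hx]
    exact isAddUnit_zero

theorem hahnSeries_isUnit_coeff_zero_of_mul_eq_one [CommSemiring R] {x y : HahnSeries Γ R}
    (h0 : IsUnit (x.coeff 0)) (hneg : ∀ a < 0, x.coeff a = 0) (hxy : x * y = 1) :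
    IsUnit (y.coeff 0) := by
  nontriviality R
  have hx : x.order = 0 := hahnSeries_order_eq_of_coeff_ne_zero h0.ne_zero hneg
  have hlead : IsUnit x.leadingCoeff := by rwa [HahnSeries.leadingCoeff_eq, hx]
  have hmul : x.leadingCoeff * y.leadingCoeff ≠ 0 := by
    rw [Ne, hlead.mul_right_eq_zero, HahnSeries.leadingCoeff_eq_zero]
    exact right_ne_zero_of_mul_eq_one hxy
  have hy : y.order = 0 := by
    simpa [hxy, hx] using (HahnSeries.order_mul_of_ne_zero hmul).symm
  have hcoeff : x.leadingCoeff * y.coeff 0 = 1 := by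
    simpa [hxy, HahnSeries.leadingCoeff_eq, hy] using
      (HahnSeries.leadingCoeff_mul_of_ne_zero hmul).symm
  exact .of_mul_eq_one_right _ hcoeff

theorem hahnSeries_isUnit_map_coeff_zero_of_mul_eq_one {S : Type*} [CommSemiring R]
    [CommSemiring S] (φ : R →+* S) {x y : HahnSeries Γ R} (h0 : IsUnit (φ (x.coeff 0)))
    (hneg : ∀ a < 0, φ (x.coeff a) = 0) (hxy : x * y = 1) : IsUnit (φ (y.coeff 0)) := by
  have hmap : x.map φ * y.map φ = 1 :=
    calc x.map φ * y.map φ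
      _ = (x * y).map φ := (HahnSeries.map_mul (φ : R →ₙ+* S)).symm
      _ = (1 : HahnSeries Γ R).map φ := by rw [hxy]
      _ = 1 := HahnSeries.map_one φ.toMonoidWithZeroHom
  exact hahnSeries_isUnit_coeff_zero_of_mul_eq_one (x := x.map φ) h0 hneg hmap

end LeadingTerm

section FiniteSupport

variable {Γ R : Type*}

theorem hahnSeries_sum_single_coeff [PartialOrder Γ] [AddCommMonoid R] {x : HahnSeries Γ R}
    (hx : x.support.Finite) : ∑ a ∈ hx.toFinset, HahnSeries.single a (x.coeff a) = x := by
  classical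
  ext b
  simp +contextual [HahnSeries.coeff_sum, HahnSeries.coeff_single, eq_comm]

theorem hahnSeries_isNilpotent_of_finite_support [AddCommMonoid Γ] [PartialOrder Γ]
    [IsOrderedCancelAddMonoid Γ] [CommSemiring R] {x : HahnSeries Γ R}
    (hfin : x.support.Finite) (hnil : ∀ a, IsNilpotent (x.coeff a)) : IsNilpotent x := by
  rw [← hahnSeries_sum_single_coeff hfin]
  refine isNilpotent_sum fun a _ ↦ ?_
  obtain ⟨k, hk⟩ := hnil a
  exact ⟨k, by rw [HahnSeries.single_pow, hk, HahnSeries.single_eq_zero]⟩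

theorem hahnSeries_finite_support_lt [LinearOrder Γ] [LocallyFiniteOrder Γ] [Zero Γ] [Zero R]
    (x : HahnSeries Γ R) (c : Γ) : {a ∈ x.support | a < c}.Finite :=
  (Set.finite_Ico x.order c).subset fun _ ha ↦
    ⟨HahnSeries.order_le_of_coeff_ne_zero ha.1, ha.2⟩

end FiniteSupport

section NilpotentNegativePart

variable {Γ R : Type*} [AddCommMonoid Γ] [LinearOrder Γ] [IsOrderedCancelAddMonoid Γ] [CommRing R]

theorem hahnSeries_isUnit_of_isNilpotent_coeff_neg {f : HahnSeries Γ R}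
    (hfin : {a ∈ f.support | a < 0}.Finite) (h0 : IsUnit (f.coeff 0))
    (hneg : ∀ a < 0, IsNilpotent (f.coeff a)) : IsUnit f := by
  set N := HahnSeries.truncLT 0 f with hN
  have hNnil : IsNilpotent N := by
    apply hahnSeries_isNilpotent_of_finite_support
    · rwa [hN, HahnSeries.support_truncLT]
    · intro a
      rw [hN, HahnSeries.coeff_truncLT]
      split_ifs with ha
      exacts [hneg a ha, .zero]
  have hPunit : IsUnit (f - N) := by
    apply hahnSeries_isUnit_of_isUnit_coeff_zero
    · simpa [hN] using h0
    · intro a ha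
      simp [hN, ha]
  simpa using hNnil.isUnit_add_left_of_commute hPunit (.all _ _)

theorem laurentSeries_isUnit_of_unit_coeff_zero_general (f : HahnSeries Γ R)
    (hfin : {a ∈ f.support | a < 0}.Finite) (h0 : IsUnit (f.coeff 0))
    (hneg : ∀ a < 0, f.coeff a ∈ nilradical R) :
    IsUnit f ∧ ∀ g : HahnSeries Γ R, f * g = 1 →
      IsUnit (Ideal.Quotient.mk (nilradical R) (g.coeff 0)) :=
  ⟨hahnSeries_isUnit_of_isNilpotent_coeff_neg hfin h0 hneg, fun _ hfg ↦
    hahnSeries_isUnit_map_coeff_zero_of_mul_eq_one _ (h0.map _)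
      (fun a ha ↦ Ideal.Quotient.eq_zero_iff_mem.mpr (hneg a ha)) hfg⟩

end NilpotentNegativePart

/-- Let `R` be a commutative ring with nilradical `√R` and let
`f = Σ aₙ zⁿ ∈ R((z))` with `a₀` a unit and `aₙ ∈ √R` for all `n < 0`.  Then `f`
is invertible in `R((z))`, and the leading coefficient (the coefficient of `z⁰`)
of `f⁻¹` is a unit modulo nilpotents. -/
theorem laurentSeries_isUnit_of_unit_coeff_zero {R : Type*} [CommRing R]
    (f : LaurentSeries R) (h0 : IsUnit (f.coeff 0))
    (hneg : ∀ n < (0 : ℤ), f.coeff n ∈ nilradical R) :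
    IsUnit f ∧ ∀ g : LaurentSeries R, f * g = 1 →
      IsUnit (Ideal.Quotient.mk (nilradical R) (g.coeff 0)) :=
  laurentSeries_isUnit_of_unit_coeff_zero_general f (hahnSeries_finite_support_lt f 0) h0 hneg
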